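/- With W and D as in the DGA (W, D) above, the kernel of D is the ℤ/2-subalgebra of W generated by x_2, x_3, x_8, x_{12}, x_5², and x_3²x_9 + x_5³. -/

import Mathlib

open MvPolynomial

-- Variables: X 0 = x_2, X 1 = x_3, X 2 = x_5, X 3 = x_8, X 4 = x_9, X 5 = x_12.

noncomputable def Jid : Ideal (MvPolynomial (Fin 6) (ZMod 2)) :=
  Ideal.span {X 0 * X 1, X 0 * X 2, X 0 * X 4,
    X 4 ^ 2 + X 1 ^ 2 * X 5 + X 2 ^ 2 * X 3 + X 1 ^ 3 * X 4 + X 1 * X 2 ^ 3}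

abbrev W : Type := MvPolynomial (Fin 6) (ZMod 2) ⧸ Jid

noncomputable def Dder :
    Derivation (ZMod 2) (MvPolynomial (Fin 6) (ZMod 2)) (MvPolynomial (Fin 6) (ZMod 2)) :=
  mkDerivation (ZMod 2) ![0, 0, X 1 ^ 2, 0, X 2 ^ 2, 0]

/-- The base ring `F₂[b, q, e, t]`, with `b = x_3`, `q = x_5²`, `e = x_8`, `t = x_12`. -/
abbrev RR : Type := MvPolynomial (Fin 4) (ZMod 2)

/-- `F₂[b, c, e, t]`, as a quadratic extension `c² = q` of `RR`. -/
abbrev SS : Type := QuadraticAlgebra RR (X 1) 0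

/-- The quadratic extension of `SS` by `n = x_9`. -/
abbrev TT : Type :=
  QuadraticAlgebra SS
    ⟨X 0 ^ 2 * X 3 + X 1 * X 2, X 0 * X 1⟩ ⟨X 0 ^ 3, 0⟩

/-- Constants in `TT`. -/
noncomputable def kT (r : RR) : TT := ⟨⟨r, 0⟩, 0⟩

/-- Images of the generators in `TT`. -/
noncomputable def genT : Fin 6 → TT :=
  ![0, kT (X 0), ⟨⟨0, 1⟩, 0⟩, kT (X 2), ⟨0, 1⟩, kT (X 3)]

lemma two_eq_zero_RR : (2 : RR) = 0 := CharTwo.two_eq_zero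

lemma add_self_RR (r : RR) : r + r = 0 := CharTwo.add_self_eq_zero r

/-- The quartic relation evaluated at a family. -/
def relE {A : Type*} [CommRing A] (g : Fin 6 → A) : A :=
  g 4 ^ 2 + g 1 ^ 2 * g 5 + g 2 ^ 2 * g 3 + g 1 ^ 3 * g 4 + g 1 * g 2 ^ 3

lemma genT_relation : relE genT = 0 := by
  have h2 := two_eq_zero_RR
  unfold relE
  ext1 <;> ext1 <;> simp [genT, kT, pow_succ] <;> ring_nf <;> simp [h2]

lemma lift_aux {A : Type*} [CommRing A] [Algebra (ZMod 2) A] (g : Fin 6 → A) (h0 : g 0 = 0)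
    (hN : relE g = 0)
    (f : MvPolynomial (Fin 6) (ZMod 2)) (hf : f ∈ Jid) :
    (aeval (R := ZMod 2) g : _ →ₐ[ZMod 2] A) f = 0 := by
  have hle : Jid ≤ RingHom.ker (aeval (R := ZMod 2) g : _ →ₐ[ZMod 2] A) := by
    unfold Jid
    rw [Ideal.span_le]
    rintro p (rfl | rfl | rfl | rfl)
    · simp [h0]
    · simp [h0]
    · simp [h0]
    · simpa [relE] using hN
  exact hle hf

/-- Maps out of `W`. -/
noncomputable def liftW {A : Type*} [CommRing A] [Algebra (ZMod 2) A] (g : Fin 6 → A)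
    (h0 : g 0 = 0) (hN : relE g = 0) : W →+* A :=
  Ideal.Quotient.lift Jid (aeval (R := ZMod 2) g : _ →ₐ[ZMod 2] A).toRingHom
    (lift_aux g h0 hN)

lemma liftW_mk_X {A : Type*} [CommRing A] [Algebra (ZMod 2) A] (g : Fin 6 → A)
    (h0 : g 0 = 0) (hN : relE g = 0) (i : Fin 6) :
    liftW g h0 hN (Ideal.Quotient.mk Jid (X i)) = g i := by
  simp [liftW]

lemma genT_zero : genT 0 = 0 := by simp [genT]

/-- The algebra map `W → TT`. -/
noncomputable def phiW : W →+* TT := liftW genT genT_zero genT_relation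

/-- The generators of `W`. -/
noncomputable def gW (i : Fin 6) : W := Ideal.Quotient.mk Jid (X i)

lemma phiW_gW (i : Fin 6) : phiW (gW i) = genT i := by
  exact liftW_mk_X genT genT_zero genT_relation i

/-- The map `RR → W` with `q ↦ x_5²`. -/
noncomputable def iW : RR →ₐ[ZMod 2] W := aeval ![gW 1, gW 2 ^ 2, gW 3, gW 5]

lemma iW0 : iW (X 0) = gW 1 := by simp [iW]
lemma iW1 : iW (X 1) = gW 2 ^ 2 := by simp [iW]
lemma iW2 : iW (X 2) = gW 3 := by simp [iW]
lemma iW3 : iW (X 3) = gW 5 := by simp [iW]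

lemma phiW_iW (r : RR) : phiW (iW r) = kT r := by
  induction r using MvPolynomial.induction_on with
  | C a =>
    have : a = 0 ∨ a = 1 := by revert a; decide
    rcases this with rfl | rfl
    · simp [kT]; rfl
    · simp [kT]; rfl
  | add p q hp hq =>
    rw [map_add, map_add, hp, hq]
    ext1 <;> ext1 <;> simp [kT]
  | mul_X p i hp =>
    rw [map_mul, map_mul, hp]
    have : phiW (iW (X i)) = kT (X i) := by
      fin_cases i
      · simp only [Fin.zero_eta, iW0, phiW_gW]; rfl
      · simp only [Fin.mk_one, iW1, phiW_gW, map_pow]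
        ext1 <;> ext1 <;> simp [kT, genT, pow_two]
      · simp only [Fin.reduceFinMk, iW2, phiW_gW]; rfl
      · simp only [Fin.reduceFinMk, iW3, phiW_gW]; rfl
    rw [this]
    ext1 <;> ext1 <;> simp [kT]

lemma detect (r s v : RR) (h : iW r + iW s * gW 2 + iW v * gW 4 = 0) :
    r = 0 ∧ v = 0 := by
  have h' := congrArg phiW h
  simp only [map_add, map_mul, phiW_iW, phiW_gW, map_zero] at h'
  have h1 := congrArg (fun z : TT => z.re.re) h'
  have h2 := congrArg (fun z : TT => z.im.re) h'
  simp [kT, genT] at h1 h2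
  exact ⟨h1, h2⟩

/-- The subalgebra of the statement. -/
noncomputable def KW : Subalgebra (ZMod 2) W :=
  Algebra.adjoin (ZMod 2)
        {Ideal.Quotient.mk Jid (X 0), Ideal.Quotient.mk Jid (X 1),
         Ideal.Quotient.mk Jid (X 3), Ideal.Quotient.mk Jid (X 5),
         Ideal.Quotient.mk Jid (X 2 ^ 2),
         Ideal.Quotient.mk Jid (X 1 ^ 2 * X 4 + X 2 ^ 3)}

lemma KW0 : gW 0 ∈ KW := Algebra.subset_adjoin (by simp [gW])
lemma KW1 : gW 1 ∈ KW := Algebra.subset_adjoin (by simp [gW])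
lemma KW3 : gW 3 ∈ KW := Algebra.subset_adjoin (by simp [gW])
lemma KW5 : gW 5 ∈ KW := Algebra.subset_adjoin (by simp [gW])
lemma KW2 : gW 2 ^ 2 ∈ KW := Algebra.subset_adjoin (by simp [gW])
lemma KW4 : gW 1 ^ 2 * gW 4 + gW 2 ^ 3 ∈ KW := Algebra.subset_adjoin (by simp [gW])

lemma iW_mem (r : RR) : iW r ∈ KW := by
  induction r using MvPolynomial.induction_on with
  | C a => exact (algebraMap_eq (σ := Fin 4) (R := ZMod 2)) ▸ (iW.commutes a).symm ▸ KW.algebraMap_mem a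
  | add p q hp hq => rw [map_add]; exact KW.add_mem hp hq
  | mul_X p i hp =>
    rw [map_mul]
    refine KW.mul_mem hp ?_
    fin_cases i
    · exact iW0 ▸ KW1
    · exact iW1 ▸ KW2
    · exact iW2 ▸ KW3
    · exact iW3 ▸ KW5

lemma rel01 : gW 0 * gW 1 = 0 := by
  unfold gW
  rw [← map_mul]
  exact Ideal.Quotient.eq_zero_iff_mem.2 (Ideal.subset_span (by simp))
lemma rel02 : gW 0 * gW 2 = 0 := by
  unfold gW
  rw [← map_mul]
  exact Ideal.Quotient.eq_zero_iff_mem.2 (Ideal.subset_span (by simp))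
lemma rel04 : gW 0 * gW 4 = 0 := by
  unfold gW
  rw [← map_mul]
  exact Ideal.Quotient.eq_zero_iff_mem.2 (Ideal.subset_span (by simp))
lemma relN : gW 4 ^ 2 + gW 1 ^ 2 * gW 5 + gW 2 ^ 2 * gW 3 + gW 1 ^ 3 * gW 4
    + gW 1 * gW 2 ^ 3 = 0 := by
  unfold gW
  simp only [← map_mul, ← map_pow, ← map_add]
  exact Ideal.Quotient.eq_zero_iff_mem.2 (Ideal.subset_span (by simp))

lemma two_W : (2 : W) = 0 := by
  have h : (2 : MvPolynomial (Fin 6) (ZMod 2)) = 0 := CharTwo.two_eq_zero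
  have := congrArg (Ideal.Quotient.mk Jid) h
  rw [map_zero] at this
  exact this

lemma ring_id_n {A : Type*} [CommRing A] (a b c e n t y u0 u1 v0 v1 : A) (h2 : (2 : A) = 0)
    (h04 : a * n = 0)
    (hN : n ^ 2 + b ^ 2 * t + c ^ 2 * e + b ^ 3 * n + b * c ^ 3 = 0) :
    (a * y + u0 + u1 * c + v0 * n + v1 * c * n) * n =
      a * 0 + (v0 * (b ^ 2 * t + c ^ 2 * e) + v1 * b * c ^ 2 * c ^ 2)
        + (v0 * b * c ^ 2 + v1 * (b ^ 2 * t + c ^ 2 * e)) * c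
        + (u0 + v0 * b ^ 3) * n + (u1 + v1 * b ^ 3) * c * n := by
  linear_combination y * h04 + (v0 + v1 * c) * hN
    - (v0 + v1 * c) * (b ^ 2 * t + c ^ 2 * e + b ^ 3 * n + b * c ^ 3) * h2

lemma normal_form (w : W) : ∃ y ∈ KW, ∃ u0 u1 v0 v1 : RR,
    w = gW 0 * y + iW u0 + iW u1 * gW 2 + iW v0 * gW 4 + iW v1 * gW 2 * gW 4 := by
  obtain ⟨f, rfl⟩ := Ideal.Quotient.mk_surjective w
  induction f using MvPolynomial.induction_on with
  | C a =>
    refine ⟨0, KW.zero_mem, C a, 0, 0, 0, ?_⟩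
    have h1 : iW (C a) = algebraMap (ZMod 2) W a := iW.commutes a
    rw [h1]
    simp
    rfl
  | add p q hp hq =>
    obtain ⟨y, hy, u0, u1, v0, v1, h⟩ := hp
    obtain ⟨y', hy', u0', u1', v0', v1', h'⟩ := hq
    refine ⟨y + y', KW.add_mem hy hy', u0 + u0', u1 + u1', v0 + v0', v1 + v1', ?_⟩
    rw [map_add, h, h']
    simp only [map_add]
    ring
  | mul_X p i hp =>
    obtain ⟨y, hy, u0, u1, v0, v1, h⟩ := hp
    rw [map_mul, h]
    change ∃ y ∈ KW, ∃ u0' u1' v0' v1' : RR, _ * gW i = _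
    have r1 := rel01
    have r2 := rel02
    have r4 := rel04
    fin_cases i
    · refine ⟨gW 0 * y + iW u0, KW.add_mem (KW.mul_mem KW0 hy) (iW_mem _), 0, 0, 0, 0, ?_⟩
      simp only [map_zero, Fin.zero_eta]
      linear_combination iW u1 * r2 + iW v0 * r4 + iW v1 * gW 2 * r4
    · refine ⟨0, KW.zero_mem, u0 * X 0, u1 * X 0, v0 * X 0, v1 * X 0, ?_⟩
      simp only [map_mul, iW0, Fin.mk_one]
      linear_combination y * r1
    · refine ⟨0, KW.zero_mem, u1 * X 1, u0, v1 * X 1, v0, ?_⟩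
      simp only [map_mul, iW1, Fin.reduceFinMk]
      linear_combination y * r2
    · refine ⟨y * gW 3, KW.mul_mem hy KW3, u0 * X 2, u1 * X 2, v0 * X 2, v1 * X 2, ?_⟩
      simp only [map_mul, iW2, Fin.reduceFinMk]
      ring
    · refine ⟨0, KW.zero_mem, v0 * (X 0 ^ 2 * X 3 + X 1 * X 2) + v1 * X 0 * X 1 * X 1,
        v0 * X 0 * X 1 + v1 * (X 0 ^ 2 * X 3 + X 1 * X 2),
        u0 + v0 * X 0 ^ 3, u1 + v1 * X 0 ^ 3, ?_⟩
      simp only [map_mul, map_add, map_pow, iW0, iW1, iW2, iW3, Fin.reduceFinMk]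
      exact ring_id_n _ _ _ _ _ _ _ _ _ _ _ two_W r4 relN
    · refine ⟨y * gW 5, KW.mul_mem hy KW5, u0 * X 3, u1 * X 3, v0 * X 3, v1 * X 3, ?_⟩
      simp only [map_mul, iW3, Fin.reduceFinMk]
      ring

lemma coprime_step (u v : RR) (h : u * X 0 ^ 2 + v * X 1 = 0) :
    ∃ s, u = X 1 * s ∧ v = X 0 ^ 2 * s := by
  have hp : Prime (X 0 : RR) := X_prime
  have hnd : ¬ (X 0 : RR) ∣ X 1 := by
    rw [X_dvd_X]
    simp
  have hd : (X 0 : RR) ^ 2 ∣ v * X 1 := ⟨-u, by linear_combination h⟩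
  obtain ⟨s, rfl⟩ := hp.pow_dvd_of_dvd_mul_right 2 hnd hd
  refine ⟨s, ?_, rfl⟩
  have h0 : (X 0 : RR) ^ 2 ≠ 0 := pow_ne_zero _ hp.ne_zero
  apply mul_left_cancel₀ h0
  linear_combination h - X 0 ^ 2 * X 1 * s * two_eq_zero_RR

lemma Dbar_mul (Dbar : W →ₗ[ZMod 2] W)
    (hD : ∀ f : MvPolynomial (Fin 6) (ZMod 2),
      Dbar (Ideal.Quotient.mk Jid f) = Ideal.Quotient.mk Jid (Dder f))
    (x y : W) : Dbar (x * y) = x * Dbar y + y * Dbar x := by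
  obtain ⟨f, rfl⟩ := Ideal.Quotient.mk_surjective x
  obtain ⟨g, rfl⟩ := Ideal.Quotient.mk_surjective y
  rw [← map_mul, hD, hD, hD, Derivation.leibniz]
  simp

lemma Dbar_gW (Dbar : W →ₗ[ZMod 2] W)
    (hD : ∀ f : MvPolynomial (Fin 6) (ZMod 2),
      Dbar (Ideal.Quotient.mk Jid f) = Ideal.Quotient.mk Jid (Dder f))
    (i : Fin 6) : Dbar (gW i) = ![0, 0, gW 1 ^ 2, 0, gW 2 ^ 2, 0] i := by
  unfold gW
  rw [hD, Dder, mkDerivation_X]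
  fin_cases i <;> simp

lemma Dbar_KW (Dbar : W →ₗ[ZMod 2] W)
    (hD : ∀ f : MvPolynomial (Fin 6) (ZMod 2),
      Dbar (Ideal.Quotient.mk Jid f) = Ideal.Quotient.mk Jid (Dder f))
    (w : W) (hw : w ∈ KW) : Dbar w = 0 := by
  have h1 : Dbar (gW 1) = 0 := by simpa using Dbar_gW Dbar hD 1
  have h2 : Dbar (gW 2) = gW 1 ^ 2 := by simpa using Dbar_gW Dbar hD 2
  have h4 : Dbar (gW 4) = gW 2 ^ 2 := by simpa using Dbar_gW Dbar hD 4
  unfold KW at hw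
  induction hw using Algebra.adjoin_induction with
  | mem x hx =>
    rcases hx with rfl | rfl | rfl | rfl | rfl | rfl
    · exact Dbar_gW Dbar hD 0
    · exact Dbar_gW Dbar hD 1
    · exact Dbar_gW Dbar hD 3
    · exact Dbar_gW Dbar hD 5
    · change Dbar (gW 2 ^ 2) = 0
      rw [pow_two, Dbar_mul Dbar hD, h2]
      linear_combination gW 2 * gW 1 ^ 2 * two_W
    · change Dbar (gW 1 ^ 2 * gW 4 + gW 2 ^ 3) = 0
      simp only [pow_succ, pow_zero, one_mul, map_add, Dbar_mul Dbar hD, h1, h2, h4]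
      linear_combination 2 * gW 2 ^ 2 * gW 1 ^ 2 * two_W
  | algebraMap r =>
    have := hD (C r)
    rw [Dder, derivation_C, map_zero] at this
    exact this
  | add x y _ _ hx hy => rw [map_add, hx, hy, add_zero]
  | mul x y _ _ hx hy => rw [Dbar_mul Dbar hD, hx, hy, mul_zero, mul_zero, add_zero]

lemma ker_mem (Dbar : W →ₗ[ZMod 2] W)
    (hD : ∀ f : MvPolynomial (Fin 6) (ZMod 2),
      Dbar (Ideal.Quotient.mk Jid f) = Ideal.Quotient.mk Jid (Dder f))
    (w : W) (hw : Dbar w = 0) : w ∈ KW := by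
  obtain ⟨y, hy, u0, u1, v0, v1, rfl⟩ := normal_form w
  have h0 : Dbar (gW 0) = 0 := by simpa using Dbar_gW Dbar hD 0
  have h2 : Dbar (gW 2) = gW 1 ^ 2 := by simpa using Dbar_gW Dbar hD 2
  have h4 : Dbar (gW 4) = gW 2 ^ 2 := by simpa using Dbar_gW Dbar hD 4
  have hi : ∀ r, Dbar (iW r) = 0 := fun r => Dbar_KW Dbar hD _ (iW_mem r)
  simp only [map_add, Dbar_mul Dbar hD, h0, h2, h4, hi, Dbar_KW Dbar hD y hy] at hw
  have key := detect (u1 * X 0 ^ 2 + v0 * X 1) (v1 * X 1) (v1 * X 0 ^ 2) (by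
    simp only [map_add, map_mul, map_pow, iW0, iW1]
    linear_combination hw)
  obtain ⟨k1, k2⟩ := key
  have hv1 : v1 = 0 := by
    rcases mul_eq_zero.1 k2 with h | h
    · exact h
    · exact absurd h (pow_ne_zero _ (X_ne_zero _))
  obtain ⟨s, rfl, rfl⟩ := coprime_step _ _ k1
  subst hv1
  have e : gW 0 * y + iW u0 + iW (X 1 * s) * gW 2 + iW (X 0 ^ 2 * s) * gW 4
      + iW 0 * gW 2 * gW 4 = gW 0 * y + iW u0 + iW s * (gW 1 ^ 2 * gW 4 + gW 2 ^ 3) := by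
    simp only [map_mul, map_pow, iW0, iW1, map_zero]
    ring
  rw [e]
  exact KW.add_mem (KW.add_mem (KW.mul_mem KW0 hy) (iW_mem _)) (KW.mul_mem (iW_mem _) KW4)

/-- ker D on W is the ℤ/2-subalgebra generated by x_2, x_3, x_8, x_{12}, x_5²,
and x_3²x_9 + x_5³. -/
theorem ker_D_eq_adjoin (Dbar : W →ₗ[ZMod 2] W)
    (hD : ∀ f : MvPolynomial (Fin 6) (ZMod 2),
      Dbar (Ideal.Quotient.mk Jid f) = Ideal.Quotient.mk Jid (Dder f)) :
    {w : W | Dbar w = 0} =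
      (Algebra.adjoin (ZMod 2)
        {Ideal.Quotient.mk Jid (X 0), Ideal.Quotient.mk Jid (X 1),
         Ideal.Quotient.mk Jid (X 3), Ideal.Quotient.mk Jid (X 5),
         Ideal.Quotient.mk Jid (X 2 ^ 2),
         Ideal.Quotient.mk Jid (X 1 ^ 2 * X 4 + X 2 ^ 3)} : Subalgebra (ZMod 2) W) := by
  ext w
  exact ⟨fun h => ker_mem Dbar hD w h, fun h => Dbar_KW Dbar hD w h⟩
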